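/- Let B(z) = (b_{ij}(z)) be an l×l lower triangular matrix over ℂ[z] with det B(z) ≠ 0, satisfying: deg b_{ii}(z) ≤ deg b_{i+1,i+1}(z) for all i, and deg b_{ij}(z) < deg b_{ii}(z) for all i > j. Set α_i := deg b_{ii}(z). Suppose that for every t ∈ ℂ^× the ℂ[z]-submodule of ℂ[z]^{⊕l} generated by the columns of B(tz) equals the submodule generated by the columns of B(z). Then B(z) = B(1) · Diag(z^{α₁}, …, z^{α_l}), where B(1) is the constant matrix obtained by evaluating at z = 1, and moreover B(1)_{ij} = 0 whenever i < j, and also whenever i ≠ j and α_i = α_j. (Rigidity step proved inside Lemma 2.1.4.) -/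

import Mathlib

/-!
The hypotheses say that `B` is in column Hermite normal form, and the argument is the one that gives
uniqueness of that form. Write the `j`-th column of `B(tz)` as a combination `∑ k, u k • B_k` of the
columns of `B`. Reading this row by row, triangularity kills `u k` for `k < j`, row `j` forces `u j`
to be a constant (both sides have degree `deg b_jj`), and in a row `k > j` the identity
`b_kj(tz) - u_j b_kj(z) = b_kk u_k` has a left side of degree less than `deg b_kk`, so `u k = 0`.
Hence `b_ij(tz) = t ^ α_j b_ij(z)` for all `i` (`comp_eq_smul_of_mem_colSpan`). Comparing coefficients
for the single value `t = 2`, whose powers are distinct, makes `b_ij` a multiple of `z ^ α_j`.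
-/

open Polynomial

/-- The `ℂ[z]`-submodule of `ℂ[z]^{⊕l}` generated by the columns of a matrix `B`. -/
noncomputable def colSpan (l : ℕ) (B : Matrix (Fin l) (Fin l) (Polynomial ℂ)) :
    Submodule (Polynomial ℂ) (Fin l → Polynomial ℂ) :=
  Submodule.span (Polynomial ℂ) (Set.range fun j : Fin l => fun i : Fin l => B i j)

/-- The matrix `B(tz)`: the substitution `z ↦ t·z` applied to every entry. -/
noncomputable def substMat (l : ℕ) (t : ℂ) (B : Matrix (Fin l) (Fin l) (Polynomial ℂ)) :
    Matrix (Fin l) (Fin l) (Polynomial ℂ) :=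
  B.map fun p => p.comp (Polynomial.C t * Polynomial.X)

/-- A polynomial is divisible by one of larger degree only if the quotient vanishes. -/
lemma right_eq_zero_of_degree_mul_lt {p q r : Polynomial ℂ} (h : r = p * q)
    (hlt : r.degree < p.degree) : q = 0 := by
  by_contra hq
  have := Polynomial.degree_le_mul_left p hq
  rw [← h] at this
  exact absurd hlt (not_lt.mpr this)

lemma degree_comp_C_mul_X_le (p : Polynomial ℂ) (t : ℂ) :
    (p.comp (C t * X)).degree ≤ p.degree := by
  rw [Polynomial.degree_le_iff_coeff_zero]
  intro m hm
  rw [Polynomial.comp_C_mul_X_coeff, Polynomial.coeff_eq_zero_of_degree_lt hm, zero_mul]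

lemma diag_ne_zero_of_det_ne_zero {l : ℕ} {B : Matrix (Fin l) (Fin l) (Polynomial ℂ)}
    (hlow : ∀ i j : Fin l, i < j → B i j = 0) (hdet : B.det ≠ 0) (k : Fin l) : B k k ≠ 0 := by
  rw [Matrix.det_of_isLowerTriangular B (fun i j hij => hlow i j hij)] at hdet
  exact Finset.prod_ne_zero_iff.mp hdet k (Finset.mem_univ k)

/-- If the `j`-th column of `B(tz)` lies in the column span of the Hermite-reduced matrix `B`, then it
is a scalar multiple of the `j`-th column of `B`; the scalar is read off from the leading
coefficient of the diagonal entry. -/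
lemma comp_eq_smul_of_mem_colSpan {l : ℕ} {B : Matrix (Fin l) (Fin l) (Polynomial ℂ)}
    (hlow : ∀ i j : Fin l, i < j → B i j = 0) (hdiag : ∀ k, B k k ≠ 0)
    (hoff : ∀ i j : Fin l, j < i → (B i j).degree < (B i i).degree) (t : ℂ) (j : Fin l)
    (hmem : (fun i => substMat l t B i j) ∈ colSpan l B) (i : Fin l) :
    (B i j).comp (C t * X) = C (t ^ (B j j).natDegree) * B i j := by
  obtain ⟨u, hu⟩ := (Submodule.mem_span_range_iff_exists_fun _).mp hmem
  have hrow : ∀ i, ∑ k, u k * B i k = (B i j).comp (C t * X) := fun i => by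
    simpa [substMat] using congrFun hu i
  have hlt : ∀ k, k < j → u k = 0 := by
    intro k
    induction k using WellFoundedLT.induction with
    | ind k ih =>
      intro hk
      have h := hrow k
      rw [hlow k j hk, Polynomial.zero_comp, Finset.sum_eq_single k] at h
      · exact (mul_eq_zero.mp h).resolve_right (hdiag k)
      · intro m _ hm
        rcases lt_or_gt_of_ne hm with hm | hm
        · rw [ih m hm (hm.trans hk), zero_mul]
        · rw [hlow k m hm, mul_zero]
      · simp
  have hjrow : (B j j).comp (C t * X) = u j * B j j := by
    rw [← hrow j, Finset.sum_eq_single j]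
    · intro m _ hm
      rcases lt_or_gt_of_ne hm with hm | hm
      · rw [hlt m hm, zero_mul]
      · rw [hlow j m hm, mul_zero]
    · simp
  obtain ⟨c, hc⟩ : ∃ c, u j = C c := by
    by_cases h0 : u j = 0
    · exact ⟨0, by simp [h0]⟩
    · have hle := Polynomial.natDegree_le_natDegree (degree_comp_C_mul_X_le (B j j) t)
      rw [hjrow, Polynomial.natDegree_mul h0 (hdiag j)] at hle
      exact ⟨_, Polynomial.eq_C_of_natDegree_eq_zero (by omega)⟩
  have hct : c = t ^ (B j j).natDegree := by
    have h := congrArg (fun p => Polynomial.coeff p (B j j).natDegree) hjrow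
    simp only [hc, Polynomial.comp_C_mul_X_coeff, Polynomial.coeff_C_mul] at h
    have hl : (B j j).coeff (B j j).natDegree ≠ 0 := Polynomial.leadingCoeff_ne_zero.mpr (hdiag j)
    rw [mul_comm] at h
    exact (mul_right_cancel₀ hl h).symm
  have hgt : ∀ k, j < k → u k = 0 := by
    intro k
    induction k using WellFoundedLT.induction with
    | ind k ih =>
      intro hk
      have h := hrow k
      rw [Finset.sum_eq_add j k hk.ne] at h
      · refine right_eq_zero_of_degree_mul_lt
          (r := (B k j).comp (C t * X) - C c * B k j) (p := B k k) ?_ ?_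
        · rw [← h, hc]; ring
        · refine (Polynomial.degree_sub_le _ _).trans_lt (max_lt ?_ ?_)
          · exact (degree_comp_C_mul_X_le _ _).trans_lt (hoff k j hk)
          · rw [← Polynomial.smul_eq_C_mul]
            exact (Polynomial.degree_smul_le c _).trans_lt (hoff k j hk)
      · rintro m - ⟨hmj, hmk⟩
        rcases lt_or_gt_of_ne hmk with hmk | hmk
        · rcases lt_or_gt_of_ne hmj with hmj | hmj
          · rw [hlt m hmj, zero_mul]
          · rw [ih m hmk hmj, zero_mul]
        · rw [hlow k m hmk, mul_zero]
      · simp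
      · simp
  rw [← hrow i, Finset.sum_eq_single j, hc, hct]
  · intro m _ hm
    rcases lt_or_gt_of_ne hm with hm | hm
    · rw [hlt m hm, zero_mul]
    · rw [hgt m hm, zero_mul]
  · simp

/-- A polynomial homogeneous of weight `n` under `z ↦ 2z` is a multiple of `z ^ n`. -/
lemma eq_C_mul_X_pow_of_comp_two {p : Polynomial ℂ} {n : ℕ}
    (h : p.comp (C 2 * X) = C (2 ^ n) * p) : p = C (p.eval 1) * X ^ n := by
  have hcoeff : ∀ m, m ≠ n → p.coeff m = 0 := by
    intro m hm
    have hm' := congrArg (fun q => Polynomial.coeff q m) h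
    simp only [Polynomial.comp_C_mul_X_coeff, Polynomial.coeff_C_mul] at hm'
    rw [mul_comm] at hm'
    by_contra h0
    have h2 := mul_right_cancel₀ h0 hm'
    exact hm (Nat.pow_right_injective le_rfl (by exact_mod_cast h2))
  have hp : p = C (p.coeff n) * X ^ n := by
    ext m
    rw [Polynomial.coeff_C_mul_X_pow]
    split_ifs with hm
    · rw [hm]
    · exact hcoeff m hm
  have he : p.eval 1 = p.coeff n := by
    conv_lhs => rw [hp]
    simp
  rw [he]
  exact hp

/-- rigidity step inside Lemma 2.1.4: let `B(z)` be a lower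
triangular matrix over `ℂ[z]` with `det B ≠ 0`, nondecreasing diagonal degrees,
and `deg b_{ij} < deg b_{ii}` for `i > j`.  If for every `t ∈ ℂ^×` the columns of
`B(tz)` generate the same `ℂ[z]`-submodule as those of `B(z)`, then
`B(z) = B(1) · Diag(z^{α₁}, …, z^{α_l})` with `α_i = deg b_{ii}`, and moreover
`B(1)_{ij} = 0` whenever `i < j`, and whenever `i ≠ j` with `α_i = α_j`. -/
theorem lower_triangular_rigidity
    (l : ℕ) (B : Matrix (Fin l) (Fin l) (Polynomial ℂ))
    (hlow : ∀ i j : Fin l, i < j → B i j = 0)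
    (hdet : B.det ≠ 0)
    (hdiagmono : Monotone fun i : Fin l => (B i i).degree)
    (hoff : ∀ i j : Fin l, j < i → (B i j).degree < (B i i).degree)
    (hcols : ∀ t : ℂ, t ≠ 0 → colSpan l (substMat l t B) = colSpan l B) :
    B = ((B.map (Polynomial.eval 1)).map Polynomial.C)
          * Matrix.diagonal (fun i => Polynomial.X ^ (B i i).natDegree)
      ∧ (∀ i j : Fin l, i < j → (B i j).eval 1 = 0)
      ∧ (∀ i j : Fin l, i ≠ j → (B i i).natDegree = (B j j).natDegree →
          (B i j).eval 1 = 0) := by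
  have hdiag := diag_ne_zero_of_det_ne_zero hlow hdet
  have hentry : ∀ i j, B i j = C ((B i j).eval 1) * X ^ (B j j).natDegree := by
    intro i j
    apply eq_C_mul_X_pow_of_comp_two
    refine comp_eq_smul_of_mem_colSpan hlow hdiag hoff 2 j ?_ i
    rw [← hcols 2 two_ne_zero]
    exact Submodule.subset_span ⟨j, rfl⟩
  refine ⟨?_, fun i j hij => by rw [hlow i j hij, Polynomial.eval_zero], ?_⟩
  · ext1 i j
    rw [Matrix.mul_diagonal]
    exact hentry i j
  · intro i j hne hα
    rcases lt_or_gt_of_ne hne with hij | hij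
    · rw [hlow i j hij, Polynomial.eval_zero]
    · by_contra h0
      have hd := hoff i j hij
      -- A nonzero `b_ij` would have degree `α_j = α_i`, against `deg b_ij < α_i`.
      rw [hentry i j, Polynomial.degree_C_mul_X_pow _ h0,
        Polynomial.degree_eq_natDegree (hdiag i), hα] at hd
      exact lt_irrefl _ hd
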